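/- arXiv:1802.01941 — 3 statements merged into one kernel-verified Lean document; each statement's English description precedes it below -/
import Mathlib

section
/- Let F be a field of characteristic different from 2 and let u, ϖ ∈ F× be such that u, ϖ and uϖ are all non-squares in F×. Let E = F(√ϖ) and K = E(√u). Then the quadratic form q′ on K, viewed as a 4-dimensional F-vector space, defined by q′(k) = ½·tr_{E/F}(N_{K/E}(k)), is equivalent over F to the diagonal quadratic form ⟨1, ϖ, −u, −uϖ⟩; in particular, the determinant of the Gram matrix of q′ with respect to any F-basis of K is a square in F× (i.e., q′ has trivial discriminant). -/
lemma quad_indep {k L : Type*} [Field k] [Field L] [Algebra k L] (d : k)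
    (hd : ¬ ∃ a : k, a ^ 2 = d) (s : L) (hs : s ^ 2 = algebraMap k L d)
    (a b : k) (h : algebraMap k L a + algebraMap k L b * s = 0) : a = 0 ∧ b = 0 := by
  have hinj := (algebraMap k L).injective
  have h2 : a ^ 2 = b ^ 2 * d := by
    apply hinj
    simp only [map_pow, map_mul, ← hs]
    linear_combination (algebraMap k L a - algebraMap k L b * s) * h
  have hb : b = 0 := by
    by_contra hb
    exact hd ⟨a / b, by field_simp; linear_combination h2⟩
  subst hb
  refine ⟨?_, rfl⟩
  simpa using h2

lemma quad_formulas {k L : Type*} [Field k] [Field L] [Algebra k L] (d : k)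
    (hd : ¬ ∃ a : k, a ^ 2 = d) (s : L) (hs : s ^ 2 = algebraMap k L d)
    (hgen : ∀ x : L, ∃ a b : k, x = algebraMap k L a + algebraMap k L b * s)
    (a b : k) :
    Algebra.norm k (algebraMap k L a + algebraMap k L b * s) = a ^ 2 - d * b ^ 2 ∧
    Algebra.trace k L (algebraMap k L a + algebraMap k L b * s) = 2 * a := by
  have hli : LinearIndependent k ![(1 : L), s] := by
    rw [LinearIndependent.pair_iff]
    intro x y h
    apply quad_indep d hd s hs x y
    simpa [Algebra.smul_def] using h
  have hsp : ⊤ ≤ Submodule.span k (Set.range ![(1 : L), s]) := by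
    intro x _
    obtain ⟨x1, x2, rfl⟩ := hgen x
    simp only [Matrix.range_cons, Matrix.range_empty, Set.union_empty, Set.singleton_union]
    rw [Submodule.mem_span_pair]
    exact ⟨x1, x2, by simp [Algebra.smul_def]⟩
  let B := Module.Basis.mk hli hsp
  have hB0 : B 0 = 1 := by simp [B]
  have hB1 : B 1 = s := by simp [B]
  have hM : Algebra.leftMulMatrix B (algebraMap k L a + algebraMap k L b * s)
      = !![a, d * b; b, a] := by
    have e0 : (algebraMap k L a + algebraMap k L b * s) * B 0 = a • B 0 + b • B 1 := by
      rw [hB0, hB1]; simp [Algebra.smul_def]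
    have e1 : (algebraMap k L a + algebraMap k L b * s) * B 1 = (d * b) • B 0 + a • B 1 := by
      rw [hB0, hB1]; simp only [Algebra.smul_def, map_mul]
      linear_combination algebraMap k L b * hs
    ext i j
    rw [Algebra.leftMulMatrix_eq_repr_mul]
    fin_cases j
    · simp only [Fin.zero_eta, e0]
      fin_cases i <;> simp
    · simp only [Fin.mk_one, e1]
      fin_cases i <;> simp
  constructor
  · rw [Algebra.norm_eq_matrix_det B, hM, Matrix.det_fin_two_of]; ring
  · rw [Algebra.trace_eq_matrix_trace B, hM, Matrix.trace_fin_two_of]; ring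

/-- for `E = F(√ϖ)` and `K = E(√u)` with `u, ϖ, uϖ` non-squares in `F`
(char F ≠ 2), the quadratic form `q′(k) = ½·tr_{E/F}(N_{K/E}(k))` on the
4-dimensional `F`-vector space `K` is equivalent to `⟨1, ϖ, −u, −uϖ⟩`; in
particular its Gram determinant with respect to any `F`-basis is a nonzero
square, i.e. `q′` has trivial discriminant. -/
theorem stmt3 {F E K : Type*} [Field F] [Field E] [Field K]
    [Algebra F E] [Algebra E K] [Algebra F K] [IsScalarTower F E K]
    [FiniteDimensional F E] [FiniteDimensional E K]
    (hchar : (2 : F) ≠ 0)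
    (u ϖ : F)
    (hu : ¬ ∃ a : F, a ^ 2 = u) (hϖ : ¬ ∃ a : F, a ^ 2 = ϖ)
    (huϖ : ¬ ∃ a : F, a ^ 2 = u * ϖ)
    (sqrtϖ : E) (hsqrtϖ : sqrtϖ ^ 2 = algebraMap F E ϖ)
    (hEgen : ∀ x : E, ∃ a b : F, x = algebraMap F E a + algebraMap F E b * sqrtϖ)
    (sqrtu : K) (hsqrtu : sqrtu ^ 2 = algebraMap F K u)
    (hKgen : ∀ x : K, ∃ a b : E, x = algebraMap E K a + algebraMap E K b * sqrtu)
    (q : K → F)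
    (hq : ∀ k : K, q k = 1 / 2 * Algebra.trace F E (Algebra.norm E k)) :
    (∃ ℓ : (Fin 4 → F) ≃ₗ[F] K, ∀ v : Fin 4 → F,
        q (ℓ v) = 1 * v 0 ^ 2 + ϖ * v 1 ^ 2 + (-u) * v 2 ^ 2 + (-(u * ϖ)) * v 3 ^ 2) ∧
    (∀ b : Module.Basis (Fin 4) F K, ∃ c : F, c ≠ 0 ∧
        (Matrix.of fun i j : Fin 4 => (q (b i + b j) - q (b i) - q (b j)) / 2).det
          = c ^ 2) := by
  have huE : ¬ ∃ a : E, a ^ 2 = algebraMap F E u := by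
    rintro ⟨x, hx⟩
    obtain ⟨a, b, rfl⟩ := hEgen x
    have h0 := quad_indep ϖ hϖ sqrtϖ hsqrtϖ (a ^ 2 + b ^ 2 * ϖ - u) (2 * a * b) (by
      simp only [map_sub, map_add, map_mul, map_pow, ← hsqrtϖ, ← hx, map_ofNat]; ring)
    obtain ⟨h1, h2⟩ := h0
    rcases mul_eq_zero.1 h2 with h | h
    · rcases mul_eq_zero.1 h with h | h
      · exact hchar h
      · subst h
        exact huϖ ⟨b * ϖ, by linear_combination ϖ * h1⟩
    · subst h
      exact hu ⟨a, by linear_combination h1⟩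
  have hsu : sqrtu ^ 2 = algebraMap E K (algebraMap F E u) := by
    rw [hsqrtu, IsScalarTower.algebraMap_apply F E K]
  have hu0 : u ≠ 0 := fun h => hu ⟨0, by simp [h]⟩
  have hϖ0 : ϖ ≠ 0 := fun h => hϖ ⟨0, by simp [h]⟩
  let f : (Fin 4 → F) →ₗ[F] K :=
    { toFun := fun v =>
        algebraMap E K (algebraMap F E (v 0) + algebraMap F E (v 1) * sqrtϖ) +
        algebraMap E K (algebraMap F E (v 2) + algebraMap F E (v 3) * sqrtϖ) * sqrtu
      map_add' := by
        intro v w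
        simp only [Pi.add_apply, map_add, map_mul]; ring
      map_smul' := by
        intro c v
        simp only [Pi.smul_apply, smul_eq_mul, map_add, map_mul, Algebra.smul_def,
          RingHom.id_apply, IsScalarTower.algebraMap_apply F E K]; ring }
  have hf : ∀ v, f v = algebraMap E K (algebraMap F E (v 0) + algebraMap F E (v 1) * sqrtϖ) +
        algebraMap E K (algebraMap F E (v 2) + algebraMap F E (v 3) * sqrtϖ) * sqrtu :=
    fun _ => rfl
  have hbij : Function.Bijective f := by
    constructor
    · rw [← LinearMap.ker_eq_bot, LinearMap.ker_eq_bot']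
      intro v hv
      rw [hf] at hv
      obtain ⟨h1, h2⟩ := quad_indep _ huE sqrtu hsu _ _ hv
      obtain ⟨h3, h4⟩ := quad_indep _ hϖ sqrtϖ hsqrtϖ _ _ h1
      obtain ⟨h5, h6⟩ := quad_indep _ hϖ sqrtϖ hsqrtϖ _ _ h2
      ext i
      fin_cases i <;> simp [h3, h4, h5, h6]
    · intro x
      obtain ⟨a, b, rfl⟩ := hKgen x
      obtain ⟨a1, a2, rfl⟩ := hEgen a
      obtain ⟨b1, b2, rfl⟩ := hEgen b
      exact ⟨![a1, a2, b1, b2], by simp [hf]⟩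
  let ℓ := LinearEquiv.ofBijective f hbij
  have hℓ : ∀ v : Fin 4 → F,
      q (ℓ v) = 1 * v 0 ^ 2 + ϖ * v 1 ^ 2 + (-u) * v 2 ^ 2 + (-(u * ϖ)) * v 3 ^ 2 := by
    intro v
    have : ℓ v = f v := rfl
    rw [this, hf, hq, (quad_formulas _ huE sqrtu hsu hKgen _ _).1]
    have e : (algebraMap F E (v 0) + algebraMap F E (v 1) * sqrtϖ) ^ 2 -
        algebraMap F E u * (algebraMap F E (v 2) + algebraMap F E (v 3) * sqrtϖ) ^ 2
        = algebraMap F E (v 0 ^ 2 + ϖ * v 1 ^ 2 - u * v 2 ^ 2 - u * ϖ * v 3 ^ 2)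
          + algebraMap F E (2 * v 0 * v 1 - 2 * u * v 2 * v 3) * sqrtϖ := by
      simp only [map_sub, map_add, map_mul, map_pow, ← hsqrtϖ, map_ofNat]; ring
    rw [e, (quad_formulas _ hϖ sqrtϖ hsqrtϖ hEgen _ _).2]
    field_simp
    ring
  refine ⟨⟨ℓ, hℓ⟩, ?_⟩
  intro b
  let b0 := Module.Basis.ofEquivFun ℓ.symm
  let P := b0.toMatrix b
  have hP : ∀ i j, P i j = ℓ.symm (b j) i := by
    intro i j
    simp [P, b0, Module.Basis.toMatrix_apply]
  have hPu : P.det ≠ 0 := by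
    have h1 : P * b.toMatrix b0 = 1 := Module.Basis.toMatrix_mul_toMatrix_flip b0 b
    intro h
    have := congrArg Matrix.det h1
    rw [Matrix.det_mul, h] at this
    simp at this
  have hG : (Matrix.of fun i j : Fin 4 => (q (b i + b j) - q (b i) - q (b j)) / 2)
      = P.transpose * Matrix.diagonal ![1, ϖ, -u, -(u * ϖ)] * P := by
    ext i j
    have hqq : ∀ x, q x = 1 * ℓ.symm x 0 ^ 2 + ϖ * ℓ.symm x 1 ^ 2 + (-u) * ℓ.symm x 2 ^ 2
        + (-(u * ϖ)) * ℓ.symm x 3 ^ 2 := by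
      intro x
      rw [← hℓ, LinearEquiv.apply_symm_apply]
    rw [Matrix.of_apply, hqq, hqq (b i), hqq (b j), Matrix.mul_apply]
    simp only [Matrix.mul_diagonal, Fin.sum_univ_four, Matrix.transpose_apply, hP, map_add,
      Pi.add_apply]
    simp
    field_simp
    ring
  refine ⟨P.det * (u * ϖ), mul_ne_zero hPu (mul_ne_zero hu0 hϖ0), ?_⟩
  rw [hG, Matrix.det_mul, Matrix.det_mul, Matrix.det_transpose, Matrix.det_diagonal]
  simp [Fin.prod_univ_four]
  ring
end

section
/- Let F be a field of characteristic different from 2, let ϖ ∈ F× be a non-square, let E = F(√ϖ), and suppose √ϖ is not a square in E; let K = E(β) with β² = √ϖ (so K = E(⁴√ϖ)). Then the quadratic form q′ on K, viewed as a 4-dimensional F-vector space, defined by q′(k) = ½·tr_{E/F}(N_{K/E}(k)), is equivalent over F to the diagonal quadratic form ⟨1, ϖ, 1, −1⟩, i.e., to the orthogonal direct sum of the binary form x² + ϖy² (the norm form of L = F(√−ϖ) when −ϖ is a non-square) and a hyperbolic plane; in particular the determinant of its Gram matrix is −ϖ times a square in F×. -/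
theorem quad_basis {M L : Type*} [Field M] [Field L] [Algebra M L] (m : M) (s : L)
    (hm : ¬ ∃ a : M, a ^ 2 = m) (hs : s ^ 2 = algebraMap M L m)
    (hgen : ∀ x : L, ∃ a b : M, x = algebraMap M L a + algebraMap M L b * s) :
    ∃ b : Module.Basis (Fin 2) M L, b 0 = 1 ∧ b 1 = s := by
  have hli : LinearIndependent M ![(1 : L), s] := by
    rw [LinearIndependent.pair_iff]
    intro x y h
    rw [Algebra.smul_def, Algebra.smul_def, mul_one] at h
    have hy : y = 0 := by
      by_contra hy
      apply hm
      refine ⟨-x / y, ?_⟩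
      apply (algebraMap M L).injective
      have hy' : algebraMap M L y ≠ 0 := by simpa using hy
      have : s = -algebraMap M L x / algebraMap M L y := by
        field_simp
        linear_combination h
      rw [← hs, this]
      simp
    refine ⟨?_, hy⟩
    simpa [hy] using h
  refine ⟨Module.Basis.mk hli ?_, ?_, ?_⟩
  · intro x _
    obtain ⟨a, b, rfl⟩ := hgen x
    simp only [Matrix.range_cons, Matrix.range_empty, Set.union_empty, Set.singleton_union]
    rw [Submodule.mem_span_pair]
    exact ⟨a, b, by simp [Algebra.smul_def]⟩
  · simp
  · simp

theorem quad_matrix {M L : Type*} [Field M] [Field L] [Algebra M L] (m : M) (s : L)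
    (hs : s ^ 2 = algebraMap M L m)
    (B : Module.Basis (Fin 2) M L) (h0 : B 0 = 1) (h1 : B 1 = s) (a b : M) :
    Algebra.leftMulMatrix B (algebraMap M L a + algebraMap M L b * s) = !![a, m * b; b, a] := by
  have e0 : (algebraMap M L a + algebraMap M L b * s) * B 0 = a • B 0 + b • B 1 := by
    rw [h0, h1]; simp [Algebra.smul_def]
  have e1 : (algebraMap M L a + algebraMap M L b * s) * B 1 = (m * b) • B 0 + a • B 1 := by
    rw [h0, h1]; simp only [Algebra.smul_def, map_mul, ← hs]; ring
  ext i j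
  rw [Algebra.leftMulMatrix_eq_repr_mul]
  fin_cases j
  · simp only [Fin.zero_eta, e0]
    fin_cases i <;> simp
  · simp only [Fin.mk_one, e1]
    fin_cases i <;> simp


/-- for `E = F(√ϖ)` (`ϖ` a non-square, char F ≠ 2) and `K = E(⁴√ϖ)`
(i.e. `K = E(β)` with `β² = √ϖ`, where `√ϖ` is not a square in `E`), the quadratic
form `q′(k) = ½·tr_{E/F}(N_{K/E}(k))` on the 4-dimensional `F`-vector space `K` is
equivalent to `⟨1, ϖ, 1, −1⟩`, the orthogonal sum of `x² + ϖy²` and a hyperbolic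
plane; in particular its Gram determinant with respect to any `F`-basis is `−ϖ`
times a nonzero square. -/
theorem stmt4 {F E K : Type*} [Field F] [Field E] [Field K]
    [Algebra F E] [Algebra E K] [Algebra F K] [IsScalarTower F E K]
    [FiniteDimensional F E] [FiniteDimensional E K]
    (hchar : (2 : F) ≠ 0)
    (ϖ : F) (hϖ : ¬ ∃ a : F, a ^ 2 = ϖ)
    (sqrtϖ : E) (hsqrtϖ : sqrtϖ ^ 2 = algebraMap F E ϖ)
    (hEgen : ∀ x : E, ∃ a b : F, x = algebraMap F E a + algebraMap F E b * sqrtϖ)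
    (hns : ¬ ∃ y : E, y ^ 2 = sqrtϖ)
    (β : K) (hβ : β ^ 2 = algebraMap E K sqrtϖ)
    (hKgen : ∀ x : K, ∃ a b : E, x = algebraMap E K a + algebraMap E K b * β)
    (q : K → F)
    (hq : ∀ k : K, q k = 1 / 2 * Algebra.trace F E (Algebra.norm E k)) :
    (∃ ℓ : (Fin 4 → F) ≃ₗ[F] K, ∀ v : Fin 4 → F,
        q (ℓ v) = 1 * v 0 ^ 2 + ϖ * v 1 ^ 2 + 1 * v 2 ^ 2 + (-1) * v 3 ^ 2) ∧
    (∀ b : Module.Basis (Fin 4) F K, ∃ c : F, c ≠ 0 ∧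
        (Matrix.of fun i j : Fin 4 => (q (b i + b j) - q (b i) - q (b j)) / 2).det
          = -ϖ * c ^ 2) := by
  obtain ⟨BE, hE0, hE1⟩ := quad_basis ϖ sqrtϖ hϖ hsqrtϖ hEgen
  obtain ⟨BK, hK0, hK1⟩ := quad_basis sqrtϖ β hns hβ hKgen
  have htr : ∀ a b : F, Algebra.trace F E (algebraMap F E a + algebraMap F E b * sqrtϖ) = 2 * a := by
    intro a b
    rw [Algebra.trace_eq_matrix_trace BE, quad_matrix ϖ sqrtϖ hsqrtϖ BE hE0 hE1]
    simp [Matrix.trace_fin_two]; ring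
  have hnm : ∀ a b : E, Algebra.norm E (algebraMap E K a + algebraMap E K b * β)
      = a ^ 2 - sqrtϖ * b ^ 2 := by
    intro a b
    rw [Algebra.norm_eq_matrix_det BK, quad_matrix sqrtϖ β hβ BK hK0 hK1]
    simp [Matrix.det_fin_two]; ring
  have hϖ0 : ϖ ≠ 0 := by
    rintro rfl
    exact hϖ ⟨0, by simp⟩
  have hqv : ∀ a b c d : F, q (algebraMap E K (algebraMap F E a + algebraMap F E b * sqrtϖ)
      + algebraMap E K (algebraMap F E c + algebraMap F E d * sqrtϖ) * β)
      = a ^ 2 + ϖ * b ^ 2 - 2 * ϖ * c * d := by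
    intro a b c d
    rw [hq, hnm]
    have : (algebraMap F E a + algebraMap F E b * sqrtϖ) ^ 2
        - sqrtϖ * (algebraMap F E c + algebraMap F E d * sqrtϖ) ^ 2
        = algebraMap F E (a ^ 2 + ϖ * b ^ 2 - 2 * ϖ * c * d)
          + algebraMap F E (2 * a * b - c ^ 2 - ϖ * d ^ 2) * sqrtϖ := by
      simp only [map_add, map_sub, map_mul, map_pow, map_ofNat, ← hsqrtϖ]
      ring
    rw [this, htr]
    field_simp
  let f : (Fin 4 → F) →ₗ[F] K :=
    { toFun := fun v => algebraMap E K (algebraMap F E (v 0) + algebraMap F E (v 1) * sqrtϖ)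
        + algebraMap E K (algebraMap F E (v 2 - v 3)
          + algebraMap F E (-(v 2 + v 3) / (2 * ϖ)) * sqrtϖ) * β
      map_add' := by
        intro v w
        have : -(v 2 + w 2 + (v 3 + w 3)) / (2 * ϖ)
          = -(v 2 + v 3) / (2 * ϖ) + -(w 2 + w 3) / (2 * ϖ) := by ring
        simp only [Pi.add_apply, this]
        simp only [map_add, map_sub, map_mul]
        ring
      map_smul' := by
        intro r v
        have : -(r * v 2 + r * v 3) / (2 * ϖ) = r * (-(v 2 + v 3) / (2 * ϖ)) := by ring
        simp only [Pi.smul_apply, smul_eq_mul, RingHom.id_apply, this]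
        rw [Algebra.smul_def, IsScalarTower.algebraMap_apply F E K]
        simp only [map_add, map_sub, map_mul]
        ring }
  have hfsurj : Function.Surjective f := by
    intro k
    obtain ⟨x, y, rfl⟩ := hKgen k
    obtain ⟨a, b, rfl⟩ := hEgen x
    obtain ⟨c, d, rfl⟩ := hEgen y
    refine ⟨![a, b, (c - 2 * ϖ * d) / 2, (-c - 2 * ϖ * d) / 2], ?_⟩
    have e1 : (c - 2 * ϖ * d) / 2 - (-c - 2 * ϖ * d) / 2 = c := by field_simp; ring
    have e2 : -((c - 2 * ϖ * d) / 2 + (-c - 2 * ϖ * d) / 2) / (2 * ϖ) = d := by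
      field_simp; ring
    change algebraMap E K (algebraMap F E a + algebraMap F E b * sqrtϖ)
        + algebraMap E K (algebraMap F E ((c - 2 * ϖ * d) / 2 - (-c - 2 * ϖ * d) / 2)
          + algebraMap F E (-((c - 2 * ϖ * d) / 2 + (-c - 2 * ϖ * d) / 2) / (2 * ϖ)) * sqrtϖ) * β = _
    rw [e1, e2]
  have hfd : Module.finrank F (Fin 4 → F) = Module.finrank F K := by
    rw [← Module.finrank_mul_finrank F E K, Module.finrank_eq_card_basis BE,
      Module.finrank_eq_card_basis BK]
    simp
  haveI : FiniteDimensional F K := FiniteDimensional.trans F E K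
  have hfinj : Function.Injective f :=
    (LinearMap.injective_iff_surjective_of_finrank_eq_finrank hfd).2 hfsurj
  let ℓ : (Fin 4 → F) ≃ₗ[F] K := LinearEquiv.ofBijective f ⟨hfinj, hfsurj⟩
  have hℓ : ∀ v : Fin 4 → F,
        q (ℓ v) = 1 * v 0 ^ 2 + ϖ * v 1 ^ 2 + 1 * v 2 ^ 2 + (-1) * v 3 ^ 2 := by
    intro v
    change q (algebraMap E K (algebraMap F E (v 0) + algebraMap F E (v 1) * sqrtϖ)
        + algebraMap E K (algebraMap F E (v 2 - v 3)
          + algebraMap F E (-(v 2 + v 3) / (2 * ϖ)) * sqrtϖ) * β) = _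
    rw [hqv]
    field_simp
    ring
  refine ⟨⟨ℓ, hℓ⟩, ?_⟩
  intro b
  let b' : Module.Basis (Fin 4) F (Fin 4 → F) := b.map ℓ.symm
  let P : Matrix (Fin 4) (Fin 4) F := (Pi.basisFun F (Fin 4)).toMatrix b'
  have hP : ∀ i j, P i j = b' j i := fun i j => by simp [P, Module.Basis.toMatrix_apply]
  have hdet : P.det ≠ 0 := by
    have := (Pi.basisFun F (Fin 4)).isUnit_det b'
    rw [Module.Basis.det_apply] at this
    exact this.ne_zero
  refine ⟨P.det, hdet, ?_⟩
  have hG : (Matrix.of fun i j : Fin 4 => (q (b i + b j) - q (b i) - q (b j)) / 2)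
      = P.transpose * Matrix.diagonal ![1, ϖ, 1, -1] * P := by
    have hb : ∀ i, b i = ℓ (b' i) := fun i => by simp [b']
    ext i j
    rw [Matrix.mul_apply]
    simp only [Matrix.of_apply, hb, ← map_add, hℓ, Matrix.mul_diagonal, Fin.sum_univ_four,
      Matrix.transpose_apply, hP, Pi.add_apply]
    simp
    field_simp
    ring
  rw [hG, Matrix.det_mul, Matrix.det_mul, Matrix.det_transpose, Matrix.det_diagonal]
  simp [Fin.prod_univ_four]
  ring
end

section
/- Let F be a field of characteristic different from 2, let u, ϖ ∈ F× with ϖ a non-square, let E = F(√ϖ), and suppose u√ϖ is not a square in E; let K = E(β) with β² = u√ϖ (so K = E(⁴√ϖ·√u)). Then the quadratic form q′ on K, viewed as a 4-dimensional F-vector space, defined by q′(k) = ½·tr_{E/F}(N_{K/E}(k)), is equivalent over F to the diagonal quadratic form ⟨1, ϖ, 1, −1⟩; in particular the determinant of its Gram matrix is −ϖ times a square in F×. -/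
open Matrix in
theorem aux_quad {A L : Type*} [Field A] [Field L] [Algebra A L] (d : A)
    (hd : ¬ ∃ a : A, a ^ 2 = d) (s : L) (hs : s ^ 2 = algebraMap A L d)
    (hgen : ∀ x : L, ∃ a b : A, x = algebraMap A L a + algebraMap A L b * s) :
    (∀ a b : A, algebraMap A L a + algebraMap A L b * s = 0 → a = 0 ∧ b = 0) ∧
    (∀ a b : A, Algebra.norm A (algebraMap A L a + algebraMap A L b * s) = a ^ 2 - d * b ^ 2) ∧
    (∀ a b : A, Algebra.trace A L (algebraMap A L a + algebraMap A L b * s) = 2 * a) := by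
  have h0 : ∀ a b : A, algebraMap A L a + algebraMap A L b * s = 0 → a = 0 ∧ b = 0 := by
    intro a b h
    have hb : b = 0 := by
      by_contra hb
      apply hd
      refine ⟨a / b, ?_⟩
      have h2 : a ^ 2 = d * b ^ 2 := by
        apply (algebraMap A L).injective
        simp only [map_pow, map_mul]
        rw [← hs]
        linear_combination (algebraMap A L a - algebraMap A L b * s) * h
      field_simp
      linear_combination h2
    subst hb
    simpa using h
  let f : (Fin 2 → A) →ₗ[A] L :=
    { toFun := fun v => algebraMap A L (v 0) + algebraMap A L (v 1) * s
      map_add' := by intro v w; simp; ring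
      map_smul' := by intro c v; simp [Algebra.smul_def]; ring }
  have hf : Function.Bijective f := by
    constructor
    · rw [← LinearMap.ker_eq_bot, LinearMap.ker_eq_bot']
      intro v hv
      obtain ⟨h1, h2⟩ := h0 _ _ hv
      ext i
      fin_cases i <;> simpa
    · intro x
      obtain ⟨a, b, rfl⟩ := hgen x
      exact ⟨![a, b], by simp [f]⟩
  let e := LinearEquiv.ofBijective f hf
  let B : Module.Basis (Fin 2) A L := Module.Basis.ofEquivFun e.symm
  have hrepr : ∀ a b : A, e.symm (algebraMap A L a + algebraMap A L b * s) = ![a, b] := by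
    intro a b
    rw [LinearEquiv.symm_apply_eq]
    simp [e, f]
  have hB0 : B 0 = 1 := by simp [B, e, f]
  have hB1 : B 1 = s := by simp [B, e, f]
  have hM : ∀ a b : A, Algebra.leftMulMatrix B (algebraMap A L a + algebraMap A L b * s)
      = !![a, d * b; b, a] := by
    intro a b
    have e0 : e.symm ((algebraMap A L a + algebraMap A L b * s) * B 0) = ![a, b] := by
      rw [hB0, mul_one, hrepr]
    have e1 : e.symm ((algebraMap A L a + algebraMap A L b * s) * B 1) = ![d * b, a] := by
      rw [hB1, ← hrepr]
      congr 1
      rw [map_mul, ← hs]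
      ring
    have hr : ∀ (x : L) (i : Fin 2), B.repr x i = e.symm x i := by
      intro x i
      simp [B]
    ext i j
    rw [Algebra.leftMulMatrix_eq_repr_mul, hr]
    fin_cases j
    · simp only [Fin.zero_eta]
      rw [e0]
      fin_cases i <;> simp
    · simp only [Fin.mk_one]
      rw [e1]
      fin_cases i <;> simp
  refine ⟨h0, fun a b => ?_, fun a b => ?_⟩
  · rw [Algebra.norm_eq_matrix_det B, hM, Matrix.det_fin_two_of]
    ring
  · rw [Algebra.trace_eq_matrix_trace B, hM, Matrix.trace_fin_two_of]
    ring

/-- for `E = F(√ϖ)` (`ϖ` a non-square, char F ≠ 2), `u ∈ F^×`, and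
`K = E(β)` with `β² = u√ϖ` (where `u√ϖ` is not a square in `E`), the quadratic
form `q′(k) = ½·tr_{E/F}(N_{K/E}(k))` on the 4-dimensional `F`-vector space `K`
is equivalent to `⟨1, ϖ, 1, −1⟩`; in particular its Gram determinant with
respect to any `F`-basis is `−ϖ` times a nonzero square. -/
theorem stmt5 {F E K : Type*} [Field F] [Field E] [Field K]
    [Algebra F E] [Algebra E K] [Algebra F K] [IsScalarTower F E K]
    [FiniteDimensional F E] [FiniteDimensional E K]
    (hchar : (2 : F) ≠ 0)
    (u ϖ : F) (hu : u ≠ 0) (hϖ : ¬ ∃ a : F, a ^ 2 = ϖ)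
    (sqrtϖ : E) (hsqrtϖ : sqrtϖ ^ 2 = algebraMap F E ϖ)
    (hEgen : ∀ x : E, ∃ a b : F, x = algebraMap F E a + algebraMap F E b * sqrtϖ)
    (hns : ¬ ∃ y : E, y ^ 2 = algebraMap F E u * sqrtϖ)
    (β : K) (hβ : β ^ 2 = algebraMap E K (algebraMap F E u * sqrtϖ))
    (hKgen : ∀ x : K, ∃ a b : E, x = algebraMap E K a + algebraMap E K b * β)
    (q : K → F)
    (hq : ∀ k : K, q k = 1 / 2 * Algebra.trace F E (Algebra.norm E k)) :
    (∃ ℓ : (Fin 4 → F) ≃ₗ[F] K, ∀ v : Fin 4 → F,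
        q (ℓ v) = 1 * v 0 ^ 2 + ϖ * v 1 ^ 2 + 1 * v 2 ^ 2 + (-1) * v 3 ^ 2) ∧
    (∀ b : Module.Basis (Fin 4) F K, ∃ c : F, c ≠ 0 ∧
        (Matrix.of fun i j : Fin 4 => (q (b i + b j) - q (b i) - q (b j)) / 2).det
          = -ϖ * c ^ 2) := by
  obtain ⟨hE0, -, hEtr⟩ := aux_quad ϖ hϖ sqrtϖ hsqrtϖ hEgen
  obtain ⟨hK0, hKn, -⟩ := aux_quad (algebraMap F E u * sqrtϖ) hns β hβ hKgen
  have hϖ0 : ϖ ≠ 0 := by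
    rintro rfl
    exact hϖ ⟨0, by simp⟩
  let m : (Fin 4 → F) → K := fun v =>
    algebraMap E K (algebraMap F E (v 0) + algebraMap F E (v 1) * sqrtϖ) +
    algebraMap E K (algebraMap F E (v 2 - v 3) +
      algebraMap F E (-(v 2 + v 3) * (2 * u * ϖ)⁻¹) * sqrtϖ) * β
  have hqm : ∀ v, q (m v) = 1 * v 0 ^ 2 + ϖ * v 1 ^ 2 + 1 * v 2 ^ 2 + (-1) * v 3 ^ 2 := by
    intro v
    simp only [m]
    rw [hq, hKn]
    generalize hw : -(v 2 + v 3) * (2 * u * ϖ)⁻¹ = w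
    have hw' : 2 * u * ϖ * w = -(v 2 + v 3) := by
      rw [← hw]; field_simp
    generalize hz : v 2 - v 3 = z
    have key : (algebraMap F E (v 0) + algebraMap F E (v 1) * sqrtϖ) ^ 2 -
        algebraMap F E u * sqrtϖ * (algebraMap F E z + algebraMap F E w * sqrtϖ) ^ 2
        = algebraMap F E (v 0 ^ 2 + ϖ * v 1 ^ 2 - 2 * u * ϖ * w * z) +
          algebraMap F E (2 * v 0 * v 1 - u * (z ^ 2 + ϖ * w ^ 2)) * sqrtϖ := by
      simp only [map_add, map_sub, map_mul, map_pow, map_ofNat]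
      rw [← hsqrtϖ]
      ring
    rw [key, hEtr, hw', ← hz]
    field_simp
    ring
  let f : (Fin 4 → F) →ₗ[F] K :=
    { toFun := m
      map_add' := by
        intro v w
        simp only [m, Pi.add_apply, map_add, map_sub, map_mul, map_neg]
        ring
      map_smul' := by
        intro c v
        simp only [m, Pi.smul_apply, smul_eq_mul, map_add, map_sub, map_mul, map_neg]
        simp only [Algebra.smul_def, RingHom.id_apply, IsScalarTower.algebraMap_apply F E K]
        ring }
  have hf : Function.Bijective f := by
    constructor
    · rw [← LinearMap.ker_eq_bot, LinearMap.ker_eq_bot']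
      intro v hv
      obtain ⟨h1, h2⟩ := hK0 _ _ hv
      obtain ⟨h3, h4⟩ := hE0 _ _ h1
      obtain ⟨h5, h6⟩ := hE0 _ _ h2
      have h7 : v 2 + v 3 = 0 := by
        have hne : (2 * u * ϖ)⁻¹ ≠ 0 := inv_ne_zero (mul_ne_zero (mul_ne_zero hchar hu) hϖ0)
        exact neg_eq_zero.mp ((mul_eq_zero.mp h6).resolve_right hne)
      have h8 : v 2 = 0 := by
        have : 2 * v 2 = 0 := by linear_combination h5 + h7
        exact (mul_eq_zero.mp this).resolve_left hchar
      have h9 : v 3 = 0 := by linear_combination h7 - h8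
      ext i
      fin_cases i <;> simpa
    · intro x
      obtain ⟨y, z, rfl⟩ := hKgen x
      obtain ⟨a, b, rfl⟩ := hEgen y
      obtain ⟨c, d, rfl⟩ := hEgen z
      refine ⟨![a, b, (c - 2 * u * ϖ * d) / 2, (-c - 2 * u * ϖ * d) / 2], ?_⟩
      have e1 : (c - 2 * u * ϖ * d) / 2 - (-c - 2 * u * ϖ * d) / 2 = c := by
        field_simp; ring
      have e2 : -((c - 2 * u * ϖ * d) / 2 + (-c - 2 * u * ϖ * d) / 2) * (2 * u * ϖ)⁻¹ = d := by
        field_simp; ring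
      change m _ = _
      simp only [m, Matrix.cons_val]
      rw [e1, e2]
  let ℓ := LinearEquiv.ofBijective f hf
  have hℓ : ∀ v, q (ℓ v) = 1 * v 0 ^ 2 + ϖ * v 1 ^ 2 + 1 * v 2 ^ 2 + (-1) * v 3 ^ 2 := hqm
  refine ⟨⟨ℓ, hℓ⟩, fun b => ?_⟩
  let W : Matrix (Fin 4) (Fin 4) F := Matrix.of fun i j => ℓ.symm (b i) j
  have hG : (Matrix.of fun i j : Fin 4 => (q (b i + b j) - q (b i) - q (b j)) / 2)
      = W * Matrix.diagonal ![1, ϖ, 1, -1] * W.transpose := by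
    ext i j
    have hb : ∀ i, b i = ℓ (ℓ.symm (b i)) := fun i => (ℓ.apply_symm_apply _).symm
    have h1 : q (b i + b j) = q (ℓ (ℓ.symm (b i) + ℓ.symm (b j))) := by simp
    have h2 : ∀ i, q (b i) = q (ℓ (ℓ.symm (b i))) := by simp
    rw [Matrix.of_apply, h1, h2 i, h2 j, hℓ, hℓ, hℓ, Matrix.mul_apply]
    simp only [Matrix.mul_diagonal, Fin.sum_univ_four, Matrix.transpose_apply, W,
      Matrix.of_apply, Pi.add_apply, Matrix.cons_val]
    field_simp
    ring
  refine ⟨W.det, ?_, ?_⟩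
  · have h1 := congrArg Matrix.det
      (Module.Basis.toMatrix_mul_toMatrix_flip (Pi.basisFun F (Fin 4)) (b.map ℓ.symm))
    have h2 : W = ((Pi.basisFun F (Fin 4)).toMatrix (b.map ℓ.symm)).transpose := by
      ext i j
      simp [W, Module.Basis.toMatrix_apply]
    rw [h2, Matrix.det_transpose]
    intro h3
    rw [Matrix.det_mul, h3] at h1
    simp at h1
  · rw [hG, Matrix.det_mul, Matrix.det_mul, Matrix.det_transpose, Matrix.det_diagonal]
    simp [Fin.prod_univ_four]
    ring
end
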